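/- Let h, s, q be positive real numbers, let φ, Δ₁, Δ₂ be real numbers, and let ψ, η, Δ₃, Δ₄, Δ₅, Δ₆ be real numbers with Δ₅ > 0, Δ₆ > 0 and 0 < Δ₅ < η. For α ∈ [0,1] define TC_L(α) = qh/2 + (s/q)·((φ−Δ₁)+Δ₁α) + (qh/2)·((ψ−Δ₃)+Δ₃α)/((η+Δ₆)−Δ₆α) and TC_U(α) = qh/2 + (s/q)·((φ+Δ₂)−Δ₂α) + (qh/2)·((ψ+Δ₄)−Δ₄α)/((η−Δ₅)+Δ₅α). Then (1/2)·∫₀¹ (TC_L(α) + TC_U(α)) dα = qh/2 + (s/q)·(φ + (Δ₂−Δ₁)/4) + (qh/2)·(1/2)·{ ((ψΔ₆+ηΔ₃)/Δ₆²)·log((η+Δ₆)/η) + ((ψΔ₅+ηΔ₄)/Δ₅²)·log(η/(η−Δ₅)) − Δ₃/Δ₆ − Δ₄/Δ₅ }. -/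

import Mathlib

theorem stmt_9 (h s q φ Δ₁ Δ₂ ψ η Δ₃ Δ₄ Δ₅ Δ₆ : ℝ)
    (hh : 0 < h) (hs : 0 < s) (hq : 0 < q)
    (hΔ₅ : 0 < Δ₅) (hΔ₆ : 0 < Δ₆) (hη : Δ₅ < η) :
    (1/2) * ∫ α in (0:ℝ)..1,
        ((q * h / 2 + (s / q) * ((φ - Δ₁) + Δ₁ * α)
            + (q * h / 2) * (((ψ - Δ₃) + Δ₃ * α) / ((η + Δ₆) - Δ₆ * α)))
          + (q * h / 2 + (s / q) * ((φ + Δ₂) - Δ₂ * α)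
            + (q * h / 2) * (((ψ + Δ₄) - Δ₄ * α) / ((η - Δ₅) + Δ₅ * α)))) =
      q * h / 2 + (s / q) * (φ + (Δ₂ - Δ₁) / 4)
        + (q * h / 2) * ((1/2) * (((ψ * Δ₆ + η * Δ₃) / Δ₆ ^ 2) * Real.log ((η + Δ₆) / η)
            + ((ψ * Δ₅ + η * Δ₄) / Δ₅ ^ 2) * Real.log (η / (η - Δ₅))
            - Δ₃ / Δ₆ - Δ₄ / Δ₅)) := by
  have hη0 : 0 < η := hΔ₅.trans hη
  have key : ∀ α ∈ Set.uIcc (0:ℝ) 1, 0 < (η + Δ₆) - Δ₆ * α ∧ 0 < (η - Δ₅) + Δ₅ * α := by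
    intro α hα
    rw [Set.uIcc_of_le zero_le_one] at hα
    obtain ⟨h0, h1⟩ := hα
    constructor <;> nlinarith
  rw [intervalIntegral.integral_eq_sub_of_hasDerivAt
    (f := fun α => q * h * α + (s / q) * ((2 * φ - Δ₁ + Δ₂) * α + (Δ₁ - Δ₂) / 2 * α ^ 2)
      + (q * h / 2) * (-((ψ * Δ₆ + η * Δ₃) / Δ₆ ^ 2) * Real.log ((η + Δ₆) - Δ₆ * α)
        - Δ₃ / Δ₆ * α
        + ((ψ * Δ₅ + η * Δ₄) / Δ₅ ^ 2) * Real.log ((η - Δ₅) + Δ₅ * α) - Δ₄ / Δ₅ * α))]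
  · have e1 : η + Δ₆ - Δ₆ * 1 = η := by ring
    have e2 : η - Δ₅ + Δ₅ * 1 = η := by ring
    have h5 : η - Δ₅ ≠ 0 := by linarith
    have h6 : η + Δ₆ ≠ 0 := by linarith
    simp only [e1, e2, mul_zero, sub_zero, add_zero]
    rw [Real.log_div h6 hη0.ne', Real.log_div hη0.ne' h5]
    ring
  · intro α hα
    obtain ⟨p6, p5⟩ := key α hα
    have hid := hasDerivAt_id' α
    have l6 := ((hid.const_mul Δ₆).const_sub (η + Δ₆)).log p6.ne'
    have l5 := ((hid.const_mul Δ₅).const_add (η - Δ₅)).log p5.ne'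
    have := ((hid.const_mul (q * h)).add
      (((hid.const_mul (2 * φ - Δ₁ + Δ₂)).add ((hid.pow 2).const_mul ((Δ₁ - Δ₂) / 2))).const_mul
        (s / q))).add
      (((((l6.const_mul (-((ψ * Δ₆ + η * Δ₃) / Δ₆ ^ 2))).sub (hid.const_mul (Δ₃ / Δ₆))).add
        (l5.const_mul ((ψ * Δ₅ + η * Δ₄) / Δ₅ ^ 2))).sub (hid.const_mul (Δ₄ / Δ₅))).const_mul
        (q * h / 2))
    refine this.congr_deriv ?_
    have a6 : ((ψ - Δ₃) + Δ₃ * α) / ((η + Δ₆) - Δ₆ * α)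
        = -((ψ * Δ₆ + η * Δ₃) / Δ₆ ^ 2) * (-(Δ₆ * 1) / ((η + Δ₆) - Δ₆ * α)) - Δ₃ / Δ₆ * 1 := by
      obtain ⟨u, hu⟩ : ∃ u, u = (η + Δ₆) - Δ₆ * α := ⟨_, rfl⟩
      have hu0 : u ≠ 0 := hu ▸ p6.ne'
      rw [← hu]
      obtain rfl : η = u - Δ₆ + Δ₆ * α := by linarith
      field_simp
      ring
    have a5 : ((ψ + Δ₄) - Δ₄ * α) / ((η - Δ₅) + Δ₅ * α)
        = ((ψ * Δ₅ + η * Δ₄) / Δ₅ ^ 2) * (Δ₅ * 1 / ((η - Δ₅) + Δ₅ * α)) - Δ₄ / Δ₅ * 1 := by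
      obtain ⟨u, hu⟩ : ∃ u, u = (η - Δ₅) + Δ₅ * α := ⟨_, rfl⟩
      have hu0 : u ≠ 0 := hu ▸ p5.ne'
      rw [← hu]
      obtain rfl : η = u + Δ₅ - Δ₅ * α := by linarith
      field_simp
      ring
    rw [a6, a5]
    push_cast
    ring
  · apply ContinuousOn.intervalIntegrable
    have c6 : ∀ α ∈ Set.uIcc (0:ℝ) 1, (η + Δ₆) - Δ₆ * α ≠ 0 := fun α hα => (key α hα).1.ne'
    have c5 : ∀ α ∈ Set.uIcc (0:ℝ) 1, (η - Δ₅) + Δ₅ * α ≠ 0 := fun α hα => (key α hα).2.ne'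
    fun_prop (disch := assumption)
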